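/- Let K be an infinite field and 𝕏 ⊆ ℙ^n_K a 0-dimensional locally Gorenstein scheme which is a Cayley–Bacharach scheme. Then: (a) HF_{δ^σ_𝕏}(i) ≤ HF_𝕏(i − r_𝕏) for all i ∈ ℤ, and 𝕏 is arithmetically Gorenstein if and only if HF_{δ^σ_𝕏}(i) = HF_𝕏(i − r_𝕏) for all i ∈ ℤ; (b) 𝕏 is an almost Gorenstein scheme if and only if HF_{δ^σ_𝕏}(r_𝕏 + 1) = HF_𝕏(1). -/

import Mathlib

noncomputable section

/-! An algebraic model for a 0-dimensional subscheme `𝕏 ⊆ ℙⁿ_K` whose support avoids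
the hyperplane `Z(X₀)`.  The scheme is recorded through the local rings
`𝒪_{𝕏,p_j}` at the points `p_1, …, p_s` of its support, together with the germ map
sending a homogeneous polynomial `F` of degree `i` to the tuple of germs
`(F_{p_1}, …, F_{p_s})`; this is the degree-`i` component of the injection
`ĩ : R → Q^h(R) ≅ ∏_j 𝒪_{𝕏,p_j}[T_j, T_j⁻¹]`, where every graded component of
`Q^h(R)` is identified with `Γ = ∏_j 𝒪_{𝕏,p_j}` by dropping the powers of the `T_j`.
Since `x₀` has germ `1` at every point, the homogeneous coordinate ring
`R = P/I_𝕏` is faithfully encoded by the chain of subspaces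
`R_i ≅ V_i = germ(P_i) ⊆ Γ` (with `V_i ⊆ V_{i+1}`, and `V_i = Γ` for `i ≫ 0`). -/

/-- The data of one (fat) point of a 0-dimensional scheme: a finite local `K`-algebra. -/
structure PointData (K : Type) [Field K] : Type 1 where
  carrier : Type
  [ring : CommRing carrier]
  [alg : Algebra K carrier]
  [loc : IsLocalRing carrier]
  [findim : FiniteDimensional K carrier]

attribute [instance] PointData.ring PointData.alg PointData.loc PointData.findim

/-- A model of a 0-dimensional subscheme of `ℙⁿ_K`, no point of whose support lies
on `Z(X₀)` (coordinates being chosen so that each point has `X₀`-coordinate 1, the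
germ of `x₀` at every point is `1`). -/
structure ZeroDimScheme (K : Type) [Field K] (n : ℕ) : Type 1 where
  /-- the number of points in the support -/
  s : ℕ
  spos : 0 < s
  /-- the local rings `𝒪_{𝕏,p_j}` -/
  pt : Fin s → PointData K
  /-- the germ map: for `F` homogeneous of degree `i` this is the degree-`i`
  component of `ĩ : R → Q^h(R)`, i.e. `F ↦ (F_{p_1}, …, F_{p_s})` -/
  germ : MvPolynomial (Fin (n + 1)) K →ₐ[K] ∀ j, (pt j).carrier
  /-- the germ of `X₀` at each point is `1` -/
  germ_X0 : germ (MvPolynomial.X 0) = 1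
  /-- in all large degrees, the germ map is surjective onto `∏_j 𝒪_{𝕏,p_j}`
  (this characterizes `I_𝕏` as the full homogeneous vanishing ideal of the scheme) -/
  eventually_surj : ∃ N : ℕ, ∀ i, N ≤ i →
    Submodule.map germ.toLinearMap
      (MvPolynomial.homogeneousSubmodule (Fin (n + 1)) K i) = ⊤

namespace ZeroDimScheme

variable {K : Type} [Field K] {n : ℕ}

/-- `Γ = ∏_j 𝒪_{𝕏,p_j}`, the common model for every graded component of `Q^h(R)`. -/
abbrev Gamma (S : ZeroDimScheme K n) : Type := ∀ j, (S.pt j).carrier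

variable (S : ZeroDimScheme K n)

/-- `V i ⊆ Γ` is the image of the degree-`i` component `R_i` of the homogeneous
coordinate ring `R` under (the degree-`i` component of) `ĩ`; we identify `R_i ≅ V i`. -/
def V (i : ℕ) : Submodule K S.Gamma :=
  Submodule.map S.germ.toLinearMap
    (MvPolynomial.homogeneousSubmodule (Fin (n + 1)) K i)

/-- `R_i` for `i : ℤ` (zero in negative degrees). -/
def Vz (i : ℤ) : Submodule K S.Gamma := if 0 ≤ i then S.V i.toNat else ⊥

/-- `deg 𝕏 = Σ_j dim_K 𝒪_{𝕏,p_j}`. -/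
def degX : ℕ := Module.finrank K S.Gamma

/-- The Hilbert function `HF_𝕏(i) = dim_K R_i`. -/
def HF (i : ℕ) : ℕ := Module.finrank K (S.V i)

/-- The Hilbert function on `ℤ`. -/
def HFz (i : ℤ) : ℕ := Module.finrank K (S.Vz i)

/-- The regularity index `r_𝕏`: the least `r` with `HF_𝕏(i) = deg 𝕏` for all `i ≥ r`. -/
def rX : ℕ := sInf {r : ℕ | ∀ i, r ≤ i → S.HF i = S.degX}

/-- `κ_j = dim_K κ(p_j)`, the residue field of `𝕏` at `p_j`. -/
def kappa (j : Fin S.s) : ℕ :=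
  Module.finrank K
    ((S.pt j).carrier ⧸
      Submodule.restrictScalars K (IsLocalRing.maximalIdeal (S.pt j).carrier))

/-- `sj` is a socle element of `𝒪_{𝕏,p_j}`, i.e. `sj ∈ Ann(𝔪_{𝕏,p_j})`.  By
Proposition 1.2, the maximal `p_j`-subschemes `𝕐 ⊆ 𝕏` correspond 1-1 to the ideals
of `Γ` generated by `(0,…,0,sj,0,…,0)` with `sj` a *nonzero* socle element. -/
def IsSocle (j : Fin S.s) (sj : (S.pt j).carrier) : Prop :=
  ∀ b ∈ IsLocalRing.maximalIdeal (S.pt j).carrier, sj * b = 0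

/-- The ideal `U = ⟨(0,…,0,sj,0,…,0)⟩` of `Γ` corresponding to the maximal
`p_j`-subscheme `𝕐` determined by the socle element `sj`; one has `I_{𝕐/𝕏} = ĩ⁻¹(U)`. -/
def sepIdeal (j : Fin S.s) (sj : (S.pt j).carrier) : Submodule K S.Gamma :=
  Submodule.restrictScalars K (Ideal.span {(Pi.single j sj : S.Gamma)})

/-- The degree-`i` component `(I_{𝕐/𝕏})_i = R_i ∩ ĩ⁻¹(U)` of the ideal of the maximal
`p_j`-subscheme `𝕐` (given by the socle element `sj`) in `R`. -/
def IY (j : Fin S.s) (sj : (S.pt j).carrier) (i : ℕ) : Submodule K S.Gamma :=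
  S.V i ⊓ S.sepIdeal j sj

/-- `(I_{𝕐/𝕏})_i` for `i : ℤ`. -/
def IYz (j : Fin S.s) (sj : (S.pt j).carrier) (i : ℤ) : Submodule K S.Gamma :=
  S.Vz i ⊓ S.sepIdeal j sj

/-- The Hilbert function `HF_𝕐(i) = HF_𝕏(i) - dim_K (I_{𝕐/𝕏})_i` of the maximal
`p_j`-subscheme `𝕐` given by the socle element `sj`. -/
def HFY (j : Fin S.s) (sj : (S.pt j).carrier) (i : ℕ) : ℕ :=
  S.HF i - Module.finrank K (S.IY j sj i)

/-- `HF_𝕐` on `ℤ`. -/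
def HFYz (j : Fin S.s) (sj : (S.pt j).carrier) (i : ℤ) : ℕ :=
  S.HFz i - Module.finrank K (S.IYz j sj i)

/-- `α_{𝕐/𝕏} = min {i | (I_{𝕐/𝕏})_i ≠ 0}`. -/
def alphaY (j : Fin S.s) (sj : (S.pt j).carrier) : ℕ :=
  sInf {i : ℕ | S.IY j sj i ≠ ⊥}

/-- `μ(a) = min {i | (0,…,0,a T_j^i,0,…,0) ∈ ĩ(R)}` for `a ∈ 𝒪_{𝕏,p_j}`. -/
def mu (j : Fin S.s) (a : (S.pt j).carrier) : ℕ :=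
  sInf {i : ℕ | (Pi.single j a : S.Gamma) ∈ S.V i}

/-- `μ_{𝕐/𝕏}`, the maximal degree of a minimal separator of the maximal
`p_j`-subscheme `𝕐` given by the socle element `sj`; independently of all choices it
equals `max {μ(a·sj) | a ∈ 𝒪_{𝕏,p_j}, a·sj ≠ 0}`. -/
def muY (j : Fin S.s) (sj : (S.pt j).carrier) : ℕ :=
  sSup {m : ℕ | ∃ a : (S.pt j).carrier, a * sj ≠ 0 ∧ m = S.mu j (a * sj)}

/-- `deg_𝕏(p_j) = min {μ_{𝕐/𝕏} | 𝕐 a maximal p_j-subscheme of 𝕏}`. -/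
def degP (j : Fin S.s) : ℕ :=
  sInf {m : ℕ | ∃ sj : (S.pt j).carrier, S.IsSocle j sj ∧ sj ≠ 0 ∧ m = S.muY j sj}

/-- `𝕏` has the Cayley–Bacharach property of degree `d`: `deg_𝕏(p_j) ≥ d + 1` for all `j`. -/
def CBP (d : ℕ) : Prop := ∀ j : Fin S.s, d + 1 ≤ S.degP j

/-- `𝕏` is a Cayley–Bacharach scheme: it has `CBP(r_𝕏 - 1)`. -/
def CayleyBacharach : Prop := S.CBP (S.rX - 1)

/-- The residue class map `𝒪_{𝕏,p_j} → κ(p_j)` as a `K`-linear map. -/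
def resQ (j : Fin S.s) :
    (S.pt j).carrier →ₗ[K]
      ((S.pt j).carrier ⧸
        Submodule.restrictScalars K (IsLocalRing.maximalIdeal (S.pt j).carrier)) :=
  (Submodule.restrictScalars K (IsLocalRing.maximalIdeal (S.pt j).carrier)).mkQ

/-- The residue classes of `e 0, …, e (κ_j - 1)` form a `K`-basis of `κ(p_j)`. -/
def IsResidueBasis (j : Fin S.s) {m : ℕ} (e : Fin m → (S.pt j).carrier) : Prop :=
  LinearIndependent K (fun k => S.resQ j (e k)) ∧
    Submodule.span K (Set.range fun k => S.resQ j (e k)) = ⊤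

/-- A family `τ_j : 𝒪_{𝕏,p_j} → K` of trace maps: each `τ_j` is a generator of
`Hom_K(𝒪_{𝕏,p_j}, K)` as an `𝒪_{𝕏,p_j}`-module.  Such a family exists iff `𝕏` is
locally Gorenstein, and it induces a homogeneous trace map `σ` of degree zero of
`Q^h(R)/L₀` (componentwise). -/
def IsTraceFamily (τ : ∀ j, (S.pt j).carrier →ₗ[K] K) : Prop :=
  ∀ j, Function.Bijective
    (fun a : (S.pt j).carrier => (τ j).comp (LinearMap.mulRight K a))

/-- The total trace `Γ → K`, `y ↦ Σ_j τ_j (y_j)`; on the degree-`i` component of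
`Q^h(R)` the trace map `σ` is `q ↦ (Ttot τ q)·x₀^i`. -/
def Ttot (τ : ∀ j, (S.pt j).carrier →ₗ[K] K) : S.Gamma →ₗ[K] K :=
  ∑ j : Fin S.s, (τ j).comp (LinearMap.proj j)

/-- The degree-`k` component `(𝔠^σ_𝕏)_k ⊆ Q^h(R)_k ≅ Γ` of the Dedekind complementary
module: `g ∈ (𝔠^σ_𝕏)_k` iff `σ(g · R) ⊆ K[x₀]`, i.e. `Ttot τ (g·x) = 0` whenever
`x ∈ R_i` with `k + i < 0`. -/
def Cmod (τ : ∀ j, (S.pt j).carrier →ₗ[K] K) (k : ℤ) : Submodule K S.Gamma :=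
  ⨅ (i : ℕ) (_ : k + (i : ℤ) < 0) (x : S.Gamma) (_ : x ∈ S.V i),
    LinearMap.ker ((S.Ttot τ).comp (LinearMap.mulRight K x))

/-- The degree-`i` component `(δ^σ_𝕏)_i ⊆ Q^h(R)_i ≅ Γ` of the Dedekind different
`δ^σ_𝕏 = {f ∈ Q^h(R) | f · 𝔠^σ_𝕏 ⊆ R}`. -/
def delta (τ : ∀ j, (S.pt j).carrier →ₗ[K] K) (i : ℤ) : Submodule K S.Gamma :=
  ⨅ (k : ℤ) (g : S.Gamma) (_ : g ∈ S.Cmod τ k),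
    Submodule.comap (LinearMap.mulRight K g) (S.Vz (i + k))

/-- The Hilbert function of the Dedekind different. -/
def HFdelta (τ : ∀ j, (S.pt j).carrier →ₗ[K] K) (i : ℤ) : ℕ :=
  Module.finrank K (S.delta τ i)

/-- `𝕏` has minimal Dedekind different: `δ^σ_𝕏 = ⊕_{i ≥ 2 r_𝕏} R_i`
(recall `R_i ≅ Γ` for `i ≥ r_𝕏`). -/
def MinimalDedekind (τ : ∀ j, (S.pt j).carrier →ₗ[K] K) : Prop :=
  ∀ i : ℤ, S.delta τ i = if 2 * (S.rX : ℤ) ≤ i then ⊤ else ⊥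

/-- The degree-`i` component (`i ≥ 0`) of the conductor
`𝔉_{R̃/R} = {f ∈ R̃ | f·R̃ ⊆ R}` of `R` in `R̃ = ∏_j 𝒪_{𝕏,p_j}[T_j]`
(whose degree-`i` component is all of `Γ` for every `i ≥ 0`). -/
def cond (i : ℕ) : Submodule K S.Gamma :=
  ⨅ y : S.Gamma, Submodule.comap (LinearMap.mulRight K y) (S.V i)

/-- The conductor on `ℤ` (zero in negative degrees, where `R̃` vanishes). -/
def condZ (i : ℤ) : Submodule K S.Gamma := if 0 ≤ i then S.cond i.toNat else ⊥

/-- The degree-`i` component of the trace `tr(𝔠^σ_𝕏) = δ^σ_𝕏 · 𝔠^σ_𝕏` of the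
Dedekind complementary module. -/
def trC (τ : ∀ j, (S.pt j).carrier →ₗ[K] K) (i : ℤ) : Submodule K S.Gamma :=
  ⨆ (a : ℤ) (b : ℤ) (_ : a + b = i), S.delta τ a * S.Cmod τ b

/-- `𝕏` is nearly Gorenstein: `𝔪 ⊆ tr(𝔠^σ_𝕏)`. -/
def NearlyGorenstein (τ : ∀ j, (S.pt j).carrier →ₗ[K] K) : Prop :=
  ∀ i : ℤ, 1 ≤ i → S.Vz i ≤ S.trC τ i

/-- `𝕏` is almost Gorenstein: there is an exact sequence of graded `R`-modules
`0 → R → 𝔠^σ_𝕏(-r_𝕏) → C → 0` with `𝔪·C = 0`.  A degree-zero graded injection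
`R → 𝔠^σ_𝕏(-r_𝕏)` is multiplication by an element `g ∈ (𝔠^σ_𝕏)_{-r_𝕏}` with
`Ann_R(g) = 0`, and `𝔪·C = 0` means `𝔪 · 𝔠^σ_𝕏(-r_𝕏) ⊆ g·R`. -/
def AlmostGorenstein (τ : ∀ j, (S.pt j).carrier →ₗ[K] K) : Prop :=
  ∃ g ∈ S.Cmod τ (-(S.rX : ℤ)),
    (∀ i : ℕ, ∀ x ∈ S.V i, x * g = 0 → x = 0) ∧
    (∀ a : ℕ, 1 ≤ a → ∀ x ∈ S.V a, ∀ k : ℤ, ∀ h ∈ S.Cmod τ k,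
      x * h ∈ Submodule.map (LinearMap.mulRight K g) (S.Vz ((a : ℤ) + k + (S.rX : ℤ))))

/-- `𝕏` is arithmetically Gorenstein, i.e. `R` is a Gorenstein ring; equivalently the
canonical module is free of rank one: `𝔠^σ_𝕏 = g·R` for some `g ∈ (𝔠^σ_𝕏)_{-r_𝕏}`. -/
def ArithGorenstein (τ : ∀ j, (S.pt j).carrier →ₗ[K] K) : Prop :=
  ∃ g ∈ S.Cmod τ (-(S.rX : ℤ)),
    ∀ k : ℤ, S.Cmod τ k = Submodule.map (LinearMap.mulRight K g) (S.Vz (k + (S.rX : ℤ)))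

/-- `𝕏` is level: the socle of `R̄ = R/⟨x₀⟩` equals `R̄_{r_𝕏}`, i.e. no nonzero
homogeneous element of `R̄` of degree `< r_𝕏` is annihilated by `𝔪̄` (recall
`R̄_i ≅ V i / V (i-1)` and `x₀`-multiplication preserves germs). -/
def Level : Prop :=
  ∀ i : ℕ, i < S.rX → ∀ x ∈ S.V i,
    (∀ a : ℕ, 1 ≤ a → ∀ y ∈ S.V a, x * y ∈ S.Vz ((i : ℤ) + (a : ℤ) - 1)) →
      x ∈ S.Vz ((i : ℤ) - 1)

/-- The subspace `{x ∈ Γ | x_k = 0 for k ≠ j}` of `Γ`: the degreewise model for the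
ideal of the subscheme `𝕐_j ⊆ 𝕏` with `I_{𝕐_j} = ∩_{k ≠ j} I_k`. -/
def Wj (j : Fin S.s) : Submodule K S.Gamma :=
  ⨅ (k : Fin S.s) (_ : k ≠ j),
    LinearMap.ker (LinearMap.proj k : S.Gamma →ₗ[K] (S.pt k).carrier)

/-- `(I_{𝕐_j/𝕏})_i` for the subscheme `𝕐_j` complementary to `p_j`. -/
def IW (j : Fin S.s) (i : ℕ) : Submodule K S.Gamma := S.V i ⊓ S.Wj j

/-- The Hilbert function of the subscheme `𝕐_j` complementary to `p_j`. -/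
def HFW (j : Fin S.s) (i : ℕ) : ℕ := S.HF i - Module.finrank K (S.IW j i)

/-- `α_{𝕐_j/𝕏}` for the subscheme `𝕐_j` complementary to `p_j`. -/
def alphaW (j : Fin S.s) : ℕ := sInf {i : ℕ | S.IW j i ≠ ⊥}

/-- The subspace `{x ∈ Γ | x_k = 0 for k ∉ {j₁, j₂}}` of `Γ`: the degreewise model for
the ideal in `R` of the subscheme of the reduced scheme `𝕏` complementary to `{p_{j₁}, p_{j₂}}`. -/
def Wpair (j1 j2 : Fin S.s) : Submodule K S.Gamma :=
  ⨅ (k : Fin S.s) (_ : k ≠ j1) (_ : k ≠ j2),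
    LinearMap.ker (LinearMap.proj k : S.Gamma →ₗ[K] (S.pt k).carrier)

/-- The homogeneous vanishing ideal `I_𝕏 ⊆ P`. -/
def IX : Ideal (MvPolynomial (Fin (n + 1)) K) :=
  Ideal.span {F | (∃ i : ℕ, F ∈ MvPolynomial.homogeneousSubmodule (Fin (n + 1)) K i) ∧
    S.germ F = 0}

/-- The `n×n`-minor (Jacobian determinant with respect to `X_1, …, X_n`) of an
`n`-tuple of polynomials. -/
def jacMinor (Fs : Fin n → MvPolynomial (Fin (n + 1)) K) : MvPolynomial (Fin (n + 1)) K :=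
  Matrix.det (Matrix.of fun a b : Fin n => MvPolynomial.pderiv (Fin.succ b) (Fs a))

/-- The preimage in `P` of the Kähler different `ϑ_𝕏 ⊆ R`: the ideal generated by
`I_𝕏` together with all `n×n` minors of the Jacobian matrix of elements of `I_𝕏`. -/
def KaehlerIdeal : Ideal (MvPolynomial (Fin (n + 1)) K) :=
  S.IX ⊔ Ideal.span {m | ∃ Fs : Fin n → MvPolynomial (Fin (n + 1)) K,
    (∀ a, Fs a ∈ S.IX) ∧ m = jacMinor Fs}

/-- The degree-`i` component of the Kähler different `ϑ_𝕏 ⊆ R`, viewed inside `Γ`. -/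
def thetaPiece (i : ℕ) : Submodule K S.Gamma :=
  Submodule.map S.germ.toLinearMap
    (Submodule.restrictScalars K S.KaehlerIdeal ⊓
      MvPolynomial.homogeneousSubmodule (Fin (n + 1)) K i)

end ZeroDimScheme

end

/-! Everything rests on a unit `g` of `Q^h(R)` lying in `(𝔠^σ_𝕏)_{-r_𝕏}`. The Cayley–Bacharach
property says that some socle element of `𝒪_{𝕏,p_j}` lies outside `R_{r_𝕏 - 1}`; a linear form that
vanishes on `R_{r_𝕏 - 1}` but not on that element is `σ(g · -)` for some `g ∈ (𝔠^σ_𝕏)_{-r_𝕏}`, and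
`g` is a unit at `p_j`, since the maximal ideal kills the socle. As `K` is infinite, a vector space
is not a finite union of proper subspaces, so one `g` is a unit at all points at once.

Multiplication by `g` embeds `(δ^σ_𝕏)_i` into `R_{i - r_𝕏}`, onto if and only if
`g⁻¹ · R_{i - r_𝕏} · 𝔠^σ_𝕏 ⊆ R`. For `i = r_𝕏` this reads `𝔠^σ_𝕏 = g·R`, and for `i = r_𝕏 + 1` it
reads `𝔪 · 𝔠^σ_𝕏 ⊆ g·R` because `R_1` generates `𝔪`. -/

section UnitMultiplication

variable {R A : Type*} [CommSemiring R] [Semiring A] [Algebra R A]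

theorem mem_map_mulRight_unit_iff (g : Aˣ) (W : Submodule R A) {y : A} :
    y ∈ W.map (LinearMap.mulRight R (g : A)) ↔ y * (g⁻¹ : Aˣ) ∈ W := by
  constructor
  · rintro ⟨x, hx, rfl⟩
    simpa using hx
  · exact fun hy => ⟨_, hy, by simp⟩

theorem finrank_map_mulRight_unit (g : Aˣ) (W : Submodule R A) :
    Module.finrank R (W.map (LinearMap.mulRight R (g : A))) = Module.finrank R W :=
  (Submodule.equivMapOfInjective _ g.mulRight_bijective.injective W).finrank_eq.symm

end UnitMultiplication

theorem finrank_eq_iff_forall_mul_inv_mem {K A : Type*} [Field K] [Ring A] [Algebra K A]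
    (g : Aˣ) {D W : Submodule K A} [FiniteDimensional K W]
    (hDW : D.map (LinearMap.mulRight K (g : A)) ≤ W) :
    Module.finrank K D = Module.finrank K W ↔ ∀ x ∈ W, x * (g⁻¹ : Aˣ) ∈ D := by
  rw [← finrank_map_mulRight_unit g D]
  constructor
  · intro hfinrank x hx
    rw [← Submodule.eq_of_le_of_finrank_eq hDW hfinrank] at hx
    exact (mem_map_mulRight_unit_iff g D).1 hx
  · intro hWD
    have hle : W ≤ D.map (LinearMap.mulRight K (g : A)) := fun x hx =>
      (mem_map_mulRight_unit_iff g D).2 (hWD x hx)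
    rw [le_antisymm hDW hle]

theorem exists_isUnit_mem_of_forall_exists_isUnit_apply {K ι : Type*} [Field K] [Infinite K]
    [Finite ι] {A : ι → Type*} [∀ j, CommRing (A j)] [∀ j, Algebra K (A j)]
    [∀ j, IsLocalRing (A j)] (C : Submodule K (∀ j, A j))
    (hC : ∀ j, ∃ g ∈ C, IsUnit (g j)) : ∃ g ∈ C, IsUnit g := by
  let nonunitsAt (j : ι) : Submodule K C :=
    ((IsLocalRing.maximalIdeal (A j)).restrictScalars K).comap (LinearMap.proj j ∘ₗ C.subtype)
  have mem_nonunitsAt (j : ι) (g : C) : g ∈ nonunitsAt j ↔ ¬ IsUnit (g.1 j) :=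
    IsLocalRing.mem_maximalIdeal _
  have hcover : ⋃ j, (nonunitsAt j : Set C) ≠ Set.univ := by
    intro hunion
    obtain ⟨j, htop⟩ := Subspace.exists_eq_top_of_iUnion_eq_univ hunion
    obtain ⟨g, hg, hunit⟩ := hC j
    have hmem : (⟨g, hg⟩ : C) ∈ nonunitsAt j := htop ▸ Submodule.mem_top
    exact (mem_nonunitsAt j _).1 hmem hunit
  obtain ⟨g, hg⟩ := (Set.ne_univ_iff_exists_notMem _).1 hcover
  refine ⟨g, g.2, Pi.isUnit_iff.2 fun j => ?_⟩
  by_contra hnonunit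
  exact hg (Set.mem_iUnion.2 ⟨j, (mem_nonunitsAt j g).2 hnonunit⟩)

namespace ZeroDimScheme

variable {K : Type} [Field K] {n : ℕ} (S : ZeroDimScheme K n)

section CoordinateRing

theorem V_eq_pow (i : ℕ) : S.V i = S.V 1 ^ i := by
  rw [V, ← MvPolynomial.homogeneousSubmodule_one_pow]
  exact Submodule.map_pow _ S.germ _

theorem V_add (a b : ℕ) : S.V (a + b) = S.V a * S.V b := by
  rw [V_eq_pow, pow_add, ← V_eq_pow, ← V_eq_pow]

theorem one_mem_V (i : ℕ) : (1 : S.Gamma) ∈ S.V i :=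
  ⟨MvPolynomial.X 0 ^ i, MvPolynomial.isHomogeneous_X_pow 0 i, by simp [S.germ_X0]⟩

theorem V_mono : Monotone S.V := by
  intro a b hab
  obtain ⟨c, rfl⟩ := Nat.exists_eq_add_of_le hab
  intro x hx
  rw [V_add]
  simpa using Submodule.mul_mem_mul hx (S.one_mem_V c)

theorem Vz_natCast (i : ℕ) : S.Vz i = S.V i := by
  simp [Vz]

theorem Vz_of_neg {i : ℤ} (hi : i < 0) : S.Vz i = ⊥ :=
  if_neg hi.not_ge

theorem one_mem_Vz_zero : (1 : S.Gamma) ∈ S.Vz 0 :=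
  S.Vz_natCast 0 ▸ S.one_mem_V 0

theorem Vz_one : S.Vz 1 = S.V 1 :=
  S.Vz_natCast 1

theorem mul_mem_Vz {a b : ℤ} {x y : S.Gamma} (hx : x ∈ S.Vz a) (hy : y ∈ S.Vz b) :
    x * y ∈ S.Vz (a + b) := by
  rcases lt_or_ge a 0 with ha | ha
  · rw [S.Vz_of_neg ha, Submodule.mem_bot] at hx
    simp [hx]
  rcases lt_or_ge b 0 with hb | hb
  · rw [S.Vz_of_neg hb, Submodule.mem_bot] at hy
    simp [hy]
  lift a to ℕ using ha
  lift b to ℕ using hb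
  rw [Vz_natCast] at hx hy
  rw [← Nat.cast_add, Vz_natCast, V_add]
  exact Submodule.mul_mem_mul hx hy

end CoordinateRing

variable {S} {τ : ∀ j, (S.pt j).carrier →ₗ[K] K}

section ComplementaryModule

theorem mem_Cmod_iff {k : ℤ} {g : S.Gamma} :
    g ∈ S.Cmod τ k ↔ ∀ i : ℕ, k + i < 0 → ∀ x ∈ S.V i, S.Ttot τ (g * x) = 0 := by
  simp [Cmod, Submodule.mem_iInf]

theorem Cmod_mono : Monotone (S.Cmod τ) := fun _ _ hkl _ hg =>
  mem_Cmod_iff.2 fun i hi => mem_Cmod_iff.1 hg i (by lia)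

theorem Cmod_zero : S.Cmod τ 0 = ⊤ :=
  eq_top_iff.2 fun _ _ => mem_Cmod_iff.2 fun i hi => by lia

theorem mem_Cmod_neg_of_forall_mem_V {d : ℕ} {g : S.Gamma}
    (hg : ∀ x ∈ S.V d, S.Ttot τ (g * x) = 0) : g ∈ S.Cmod τ (-(d + 1)) :=
  mem_Cmod_iff.2 fun _ hi x hx => hg x (S.V_mono (by lia) hx)

theorem mul_mem_Cmod {a k : ℤ} {x g : S.Gamma} (hx : x ∈ S.Vz a) (hg : g ∈ S.Cmod τ k) :
    x * g ∈ S.Cmod τ (a + k) := by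
  rw [mem_Cmod_iff] at hg ⊢
  intro i hi y hy
  rcases lt_or_ge a 0 with ha | ha
  · rw [S.Vz_of_neg ha, Submodule.mem_bot] at hx
    simp [hx]
  lift a to ℕ using ha
  rw [Vz_natCast] at hx
  have hxy : x * y ∈ S.V (a + i) := S.V_add a i ▸ Submodule.mul_mem_mul hx hy
  rw [mul_comm x g, mul_assoc]
  exact hg (a + i) (by push_cast; lia) _ hxy

theorem Ttot_single (j : Fin S.s) (a : (S.pt j).carrier) :
    S.Ttot τ (Pi.single j a) = τ j a := by
  simp only [Ttot, LinearMap.sum_apply, LinearMap.comp_apply, LinearMap.proj_apply]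
  rw [Finset.sum_eq_single j (fun i _ hi => by simp [hi]) (by simp), Pi.single_eq_same]

theorem IsTraceFamily.exists_forall_Ttot_mul_eq (hτ : S.IsTraceFamily τ)
    (φ : S.Gamma →ₗ[K] K) : ∃ g : S.Gamma, ∀ x, S.Ttot τ (g * x) = φ x := by
  choose g hg using fun j =>
    (hτ j).surjective (φ ∘ₗ LinearMap.single K (fun j => (S.pt j).carrier) j)
  refine ⟨g, fun x => ?_⟩
  suffices S.Ttot τ ∘ₗ LinearMap.mulLeft K g = φ from LinearMap.congr_fun this x
  ext j a
  simpa [← Pi.single_mul_right, Ttot_single, mul_comm] using LinearMap.congr_fun (hg j) a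

end ComplementaryModule

section CayleyBacharach

theorem CBP.exists_isSocle_single_notMem_V {d : ℕ} (hd : S.CBP d) (j : Fin S.s) :
    ∃ t : (S.pt j).carrier, S.IsSocle j t ∧ (Pi.single j t : S.Gamma) ∉ S.V d := by
  have hdeg : d < S.degP j := hd j
  obtain ⟨s, hs, -, hdegs⟩ := Nat.sInf_mem (Nat.nonempty_of_pos_sInf hdeg.pos)
  have hmuY : d < S.muY j s := hdegs ▸ hdeg
  obtain ⟨_, ⟨a, -, rfl⟩, hmu⟩ := exists_lt_of_lt_csSup' hmuY
  refine ⟨a * s, fun b hb => by rw [mul_assoc, hs b hb, mul_zero], fun hmem => ?_⟩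
  exact hmu.not_ge (Nat.sInf_le hmem)

theorem CBP.exists_mem_Cmod_isUnit_apply {d : ℕ} (hd : S.CBP d) (hτ : S.IsTraceFamily τ)
    (j : Fin S.s) : ∃ g ∈ S.Cmod τ (-(d + 1)), IsUnit (g j) := by
  obtain ⟨t, ht, htV⟩ := hd.exists_isSocle_single_notMem_V j
  obtain ⟨φ, hφt, hφV⟩ := Submodule.exists_le_ker_of_notMem htV
  obtain ⟨g, hg⟩ := hτ.exists_forall_Ttot_mul_eq φ
  refine ⟨g, mem_Cmod_neg_of_forall_mem_V fun x hx => (hg x).trans (hφV hx), ?_⟩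
  by_contra hnonunit
  have hgt : g j * t = 0 := by
    rw [mul_comm]
    exact ht _ ((IsLocalRing.mem_maximalIdeal _).2 hnonunit)
  apply hφt
  rw [← hg, ← Pi.single_mul_right, hgt, Pi.single_zero, map_zero]

theorem CBP.exists_unit_mem_Cmod [Infinite K] {d : ℕ} (hd : S.CBP d)
    (hτ : S.IsTraceFamily τ) : ∃ g : S.Gammaˣ, (g : S.Gamma) ∈ S.Cmod τ (-(d + 1)) := by
  obtain ⟨_, hmem, g, rfl⟩ := exists_isUnit_mem_of_forall_exists_isUnit_apply _
    (hd.exists_mem_Cmod_isUnit_apply hτ)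
  exact ⟨g, hmem⟩

theorem CayleyBacharach.exists_unit_mem_Cmod [Infinite K] (hCB : S.CayleyBacharach)
    (hτ : S.IsTraceFamily τ) : ∃ g : S.Gammaˣ, (g : S.Gamma) ∈ S.Cmod τ (-S.rX) := by
  obtain ⟨g, hg⟩ := CBP.exists_unit_mem_Cmod hCB hτ
  -- The subtraction in `CBP (r_𝕏 - 1)` is truncated, so this is only `-(r_𝕏 - 1 + 1) ≤ -r_𝕏`.
  exact ⟨g, Cmod_mono (by lia) hg⟩

end CayleyBacharach

section DedekindDifferent

theorem mem_delta_iff {i : ℤ} {f : S.Gamma} :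
    f ∈ S.delta τ i ↔ ∀ k : ℤ, ∀ h ∈ S.Cmod τ k, f * h ∈ S.Vz (i + k) := by
  simp [delta, Submodule.mem_iInf]

theorem mul_mem_delta {a i : ℤ} {x f : S.Gamma} (hx : x ∈ S.Vz a) (hf : f ∈ S.delta τ i) :
    x * f ∈ S.delta τ (a + i) := by
  rw [mem_delta_iff] at hf ⊢
  intro k h hh
  rw [mul_assoc, add_assoc]
  exact S.mul_mem_Vz hx (hf k h hh)

theorem mul_inv_mem_delta_iff (g : S.Gammaˣ) {i : ℤ} {x : S.Gamma} :
    x * (g⁻¹ : S.Gammaˣ) ∈ S.delta τ i ↔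
      ∀ k : ℤ, ∀ h ∈ S.Cmod τ k,
        x * h ∈ (S.Vz (i + k)).map (LinearMap.mulRight K (g : S.Gamma)) := by
  simp only [mem_delta_iff, mem_map_mulRight_unit_iff, mul_right_comm x]

variable {g : S.Gammaˣ} {d : ℤ}

theorem map_mulRight_delta_le {g : S.Gamma} (hg : g ∈ S.Cmod τ (-d)) (i : ℤ) :
    (S.delta τ i).map (LinearMap.mulRight K g) ≤ S.Vz (i - d) := by
  rintro _ ⟨f, hf, rfl⟩
  exact mem_delta_iff.1 hf _ g hg

theorem HFdelta_le_HFz_sub (hg : (g : S.Gamma) ∈ S.Cmod τ (-d)) (i : ℤ) :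
    S.HFdelta τ i ≤ S.HFz (i - d) :=
  calc S.HFdelta τ i
    _ = Module.finrank K ((S.delta τ i).map (LinearMap.mulRight K (g : S.Gamma))) :=
      (finrank_map_mulRight_unit g _).symm
    _ ≤ S.HFz (i - d) := Submodule.finrank_mono (map_mulRight_delta_le hg i)

theorem HFdelta_eq_HFz_sub_iff (hg : (g : S.Gamma) ∈ S.Cmod τ (-d)) (i : ℤ) :
    S.HFdelta τ i = S.HFz (i - d) ↔
      ∀ x ∈ S.Vz (i - d), x * (g⁻¹ : S.Gammaˣ) ∈ S.delta τ i :=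
  finrank_eq_iff_forall_mul_inv_mem g (map_mulRight_delta_le hg i)

theorem forall_HFdelta_eq_HFz_sub_iff (hg : (g : S.Gamma) ∈ S.Cmod τ (-d)) :
    (∀ i, S.HFdelta τ i = S.HFz (i - d)) ↔ ((g⁻¹ : S.Gammaˣ) : S.Gamma) ∈ S.delta τ d := by
  simp only [HFdelta_eq_HFz_sub_iff hg]
  constructor
  · intro h
    simpa using h d 1 (by simpa using S.one_mem_Vz_zero)
  · intro hinv i x hx
    simpa using mul_mem_delta hx hinv

theorem HFdelta_add_one_eq_HF_one_iff (hg : (g : S.Gamma) ∈ S.Cmod τ (-d)) :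
    S.HFdelta τ (d + 1) = S.HF 1 ↔
      ∀ x ∈ S.V 1, x * (g⁻¹ : S.Gammaˣ) ∈ S.delta τ (d + 1) := by
  have hiff := HFdelta_eq_HFz_sub_iff hg (d + 1)
  rwa [add_sub_cancel_left, HFz, Vz_one] at hiff

theorem Cmod_eq_map_mulRight_iff (hg : (g : S.Gamma) ∈ S.Cmod τ (-d)) :
    (∀ k, S.Cmod τ k = (S.Vz (k + d)).map (LinearMap.mulRight K (g : S.Gamma))) ↔
      ((g⁻¹ : S.Gammaˣ) : S.Gamma) ∈ S.delta τ d := by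
  have hge (k : ℤ) : (S.Vz (k + d)).map (LinearMap.mulRight K (g : S.Gamma)) ≤ S.Cmod τ k := by
    rintro _ ⟨w, hw, rfl⟩
    simpa using mul_mem_Cmod hw hg
  have hinv := mul_inv_mem_delta_iff (τ := τ) g (i := d) (x := 1)
  simp only [one_mul, add_comm d] at hinv
  rw [hinv]
  exact forall_congr' fun k => ⟨fun h => h.le, fun h => le_antisymm h (hge k)⟩

theorem mul_mem_delta_of_forall_mem_V_one {f : S.Gamma}
    (hf : ∀ x ∈ S.V 1, x * f ∈ S.delta τ (d + 1)) {a : ℕ} (ha : 1 ≤ a) {x : S.Gamma}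
    (hx : x ∈ S.V a) : x * f ∈ S.delta τ (a + d) := by
  obtain ⟨b, rfl⟩ := Nat.exists_eq_add_of_le' ha
  suffices S.V b * S.V 1 ≤ (S.delta τ (↑(b + 1) + d)).comap (LinearMap.mulRight K f) from
    this (S.V_add b 1 ▸ hx)
  refine Submodule.mul_le.2 fun y hy z hz => ?_
  have hyzf := mul_mem_delta (S.Vz_natCast b ▸ hy) (hf z hz)
  have hdegree : ((b + 1 : ℕ) : ℤ) + d = b + (d + 1) := by push_cast; ring
  rwa [Submodule.mem_comap, LinearMap.mulRight_apply, mul_assoc, hdegree]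

end DedekindDifferent

section Gorenstein

theorem arithGorenstein_iff_exists_unit :
    S.ArithGorenstein τ ↔ ∃ g : S.Gammaˣ,
      (g : S.Gamma) ∈ S.Cmod τ (-S.rX) ∧ ((g⁻¹ : S.Gammaˣ) : S.Gamma) ∈ S.delta τ S.rX := by
  constructor
  · rintro ⟨g, hg, hC⟩
    have hone : (1 : S.Gamma) ∈ S.Cmod τ 0 := Cmod_zero (τ := τ) ▸ Submodule.mem_top
    obtain ⟨v, -, hvg⟩ := hC 0 ▸ hone
    obtain ⟨g, rfl⟩ : IsUnit g := .of_mul_eq_one_right v hvg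
    exact ⟨g, hg, (Cmod_eq_map_mulRight_iff hg).1 hC⟩
  · rintro ⟨g, hg, hinv⟩
    exact ⟨g, hg, (Cmod_eq_map_mulRight_iff hg).2 hinv⟩

theorem isUnit_of_forall_V_mul_eq_zero {g : S.Gamma}
    (hg : ∀ i : ℕ, ∀ x ∈ S.V i, x * g = 0 → x = 0) : IsUnit g := by
  obtain ⟨N, hN⟩ := S.eventually_surj
  have hV : S.V N = ⊤ := hN N le_rfl
  refine IsArtinianRing.isUnit_of_nonZeroDivisor_of_isIntegral' (R := K)
    (mem_nonZeroDivisors_iff_right.2 fun x => hg N x ?_)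
  exact hV ▸ Submodule.mem_top

theorem almostGorenstein_iff_exists_unit :
    S.AlmostGorenstein τ ↔ ∃ g : S.Gammaˣ, (g : S.Gamma) ∈ S.Cmod τ (-S.rX) ∧
      ∀ x ∈ S.V 1, x * (g⁻¹ : S.Gammaˣ) ∈ S.delta τ (S.rX + 1) := by
  constructor
  · rintro ⟨g, hg, hann, hmC⟩
    obtain ⟨g, rfl⟩ := isUnit_of_forall_V_mul_eq_zero hann
    refine ⟨g, hg, fun x hx => (mul_inv_mem_delta_iff g).2 fun k h hh => ?_⟩
    convert hmC 1 le_rfl x hx k h hh using 3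
    push_cast
    ring
  · rintro ⟨g, hg, hinv⟩
    refine ⟨g, hg, fun _ _ _ => g.mul_left_eq_zero.1, fun a ha x hx k h hh => ?_⟩
    have hxinv := mul_mem_delta_of_forall_mem_V_one hinv ha hx
    rw [add_right_comm]
    exact (mul_inv_mem_delta_iff g).1 hxinv k h hh

end Gorenstein

end ZeroDimScheme

/-- Proposition 6.10 / `propSec5.8`.  Let `K` be an infinite field
and `𝕏 ⊆ ℙⁿ_K` a 0-dimensional locally Gorenstein Cayley–Bacharach scheme.  Then:
(a) `HF_{δ^σ_𝕏}(i) ≤ HF_𝕏(i - r_𝕏)` for all `i ∈ ℤ`, and `𝕏` is arithmetically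
Gorenstein iff `HF_{δ^σ_𝕏}(i) = HF_𝕏(i - r_𝕏)` for all `i ∈ ℤ`;
(b) `𝕏` is an almost Gorenstein scheme iff `HF_{δ^σ_𝕏}(r_𝕏 + 1) = HF_𝕏(1)`. -/
theorem dedekind_CB_stmt17 (K : Type) [Field K] [Infinite K] (n : ℕ)
    (S : ZeroDimScheme K n)
    (τ : ∀ j, (S.pt j).carrier →ₗ[K] K) (hτ : S.IsTraceFamily τ)
    (hCB : S.CayleyBacharach) :
    ((∀ i : ℤ, S.HFdelta τ i ≤ S.HFz (i - (S.rX : ℤ))) ∧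
      (S.ArithGorenstein τ ↔ ∀ i : ℤ, S.HFdelta τ i = S.HFz (i - (S.rX : ℤ)))) ∧
    (S.AlmostGorenstein τ ↔ S.HFdelta τ ((S.rX : ℤ) + 1) = S.HF 1) := by
  obtain ⟨g, hg⟩ := hCB.exists_unit_mem_Cmod hτ
  refine ⟨⟨ZeroDimScheme.HFdelta_le_HFz_sub hg, ?_⟩, ?_⟩
  · rw [ZeroDimScheme.arithGorenstein_iff_exists_unit]
    constructor
    · rintro ⟨q, hq, hinv⟩
      exact (ZeroDimScheme.forall_HFdelta_eq_HFz_sub_iff hq).2 hinv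
    · exact fun hHF => ⟨g, hg, (ZeroDimScheme.forall_HFdelta_eq_HFz_sub_iff hg).1 hHF⟩
  · rw [ZeroDimScheme.almostGorenstein_iff_exists_unit]
    constructor
    · rintro ⟨q, hq, hinv⟩
      exact (ZeroDimScheme.HFdelta_add_one_eq_HF_one_iff hq).2 hinv
    · exact fun hHF => ⟨g, hg, (ZeroDimScheme.HFdelta_add_one_eq_HF_one_iff hg).1 hHF⟩
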